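/- Let Ω ⊆ ℝ² be open, ε > 0, let v : Ω → ℂ be C³ and B : Ω → ℝ² be C², and set h' := curl B. Let T be the stress-energy tensor with components T_{ij} = (∂_i^B v, ∂_j^B v) − δ_{ij}(½|∇_B v|² + (1−|v|²)²/(4ε²) − ½(curl B)²). Then pointwise on Ω: div T = (Δ_B v + (v/ε²)(1−|v|²), ∇_B v) − h' (∇^⊥ h' + (iv, ∇_B v))^⊥, where (div T)_i := ∂₁T_{1i} + ∂₂T_{2i}. -/

import Mathlib

noncomputable section

open Complex

/-- Real inner product of two complex numbers: `(a,b) = Re a · Re b + Im a · Im b`. -/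
def rip (a b : ℂ) : ℝ := a.re * b.re + a.im * b.im

/-- `(a, X)` for `a : ℂ` and `X : ℂ²`: the vector in `ℝ²` with components `(a,X₁)`, `(a,X₂)`. -/
def ripv (a : ℂ) (X : ℂ × ℂ) : ℝ × ℝ := (rip a X.1, rip a X.2)

/-- Dot product of `X : ℂ²` with `Z : ℝ²`: `X·Z = X₁Z₁ + X₂Z₂ ∈ ℂ`. -/
def cdotR (X : ℂ × ℂ) (Z : ℝ × ℝ) : ℂ := X.1 * (Z.1 : ℂ) + X.2 * (Z.2 : ℂ)

/-- Euclidean dot product on `ℝ²`. -/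
def rdot (a b : ℝ × ℝ) : ℝ := a.1 * b.1 + a.2 * b.2

/-- Perpendicular of a vector: `Z^⊥ = (−Z₂, Z₁)`. -/
def perp (a : ℝ × ℝ) : ℝ × ℝ := (-a.2, a.1)

/-! ### Spatial differential operators for functions on `ℝ²` -/

/-- First spatial partial derivative `∂₁`. -/
def pd1 {E : Type*} [NormedAddCommGroup E] [NormedSpace ℝ E]
    (f : ℝ × ℝ → E) (x : ℝ × ℝ) : E := fderiv ℝ f x (1, 0)

/-- Second spatial partial derivative `∂₂`. -/
def pd2 {E : Type*} [NormedAddCommGroup E] [NormedSpace ℝ E]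
    (f : ℝ × ℝ → E) (x : ℝ × ℝ) : E := fderiv ℝ f x (0, 1)

/-- Gradient `∇g = (∂₁g, ∂₂g)`. -/
def sgrad (g : ℝ × ℝ → ℝ) (x : ℝ × ℝ) : ℝ × ℝ := (pd1 g x, pd2 g x)

/-- Perpendicular gradient `∇^⊥ g = (−∂₂g, ∂₁g)`. -/
def sgradPerp (g : ℝ × ℝ → ℝ) (x : ℝ × ℝ) : ℝ × ℝ := (-(pd2 g x), pd1 g x)

/-- Laplacian `Δg = ∂₁∂₁g + ∂₂∂₂g`. -/
def slap (g : ℝ × ℝ → ℝ) (x : ℝ × ℝ) : ℝ := pd1 (pd1 g) x + pd2 (pd2 g) x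

/-- Curl of a vector field: `curl X = ∂₁X₂ − ∂₂X₁`. -/
def scurl (X : ℝ × ℝ → ℝ × ℝ) (x : ℝ × ℝ) : ℝ := (pd1 X x).2 - (pd2 X x).1

/-- Divergence of a vector field: `div X = ∂₁X₁ + ∂₂X₂`. -/
def sdiv (X : ℝ × ℝ → ℝ × ℝ) (x : ℝ × ℝ) : ℝ := (pd1 X x).1 + (pd2 X x).2

/-- Covariant partial derivative `∂₁^A u = ∂₁u − iA₁u`. -/
def cpd1 (A : ℝ × ℝ → ℝ × ℝ) (u : ℝ × ℝ → ℂ) (x : ℝ × ℝ) : ℂ :=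
  pd1 u x - Complex.I * ((A x).1 : ℂ) * u x

/-- Covariant partial derivative `∂₂^A u = ∂₂u − iA₂u`. -/
def cpd2 (A : ℝ × ℝ → ℝ × ℝ) (u : ℝ × ℝ → ℂ) (x : ℝ × ℝ) : ℂ :=
  pd2 u x - Complex.I * ((A x).2 : ℂ) * u x

/-- Covariant gradient `∇_A u = ∇u − iAu`. -/
def covGrad (A : ℝ × ℝ → ℝ × ℝ) (u : ℝ × ℝ → ℂ) (x : ℝ × ℝ) : ℂ × ℂ :=
  (cpd1 A u x, cpd2 A u x)

/-- Covariant Laplacian `Δ_A u = ∂₁^A ∂₁^A u + ∂₂^A ∂₂^A u`. -/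
def covLap (A : ℝ × ℝ → ℝ × ℝ) (u : ℝ × ℝ → ℂ) (x : ℝ × ℝ) : ℂ :=
  cpd1 A (cpd1 A u) x + cpd2 A (cpd2 A u) x

/-- Vorticity `μ(u,A) = curl((iu, ∇_A u) + A)`. -/
def svort (u : ℝ × ℝ → ℂ) (A : ℝ × ℝ → ℝ × ℝ) (x : ℝ × ℝ) : ℝ :=
  scurl (fun y => ripv (Complex.I * u y) (covGrad A u y) + A y) x

/-- Ginzburg–Landau energy density
`g⁰_ε(u,A) = ½(|∇_A u|² + (1−|u|²)²/(2ε²) + (curl A)²)`. -/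
def glEnergy (ε : ℝ) (u : ℝ × ℝ → ℂ) (A : ℝ × ℝ → ℝ × ℝ) (x : ℝ × ℝ) : ℝ :=
  (1 / 2) * (Complex.normSq (cpd1 A u x) + Complex.normSq (cpd2 A u x)
    + (1 - Complex.normSq (u x)) ^ 2 / (2 * ε ^ 2) + (scurl A x) ^ 2)

/-! ### Space-time differential operators for functions on `ℝ² × ℝ`
(spatial operators act in the spatial variables, `tdt` is the time derivative) -/

/-- First spatial partial derivative `∂₁`. -/
def sp1 {E : Type*} [NormedAddCommGroup E] [NormedSpace ℝ E]
    (f : (ℝ × ℝ) × ℝ → E) (z : (ℝ × ℝ) × ℝ) : E := fderiv ℝ f z ((1, 0), 0)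

/-- Second spatial partial derivative `∂₂`. -/
def sp2 {E : Type*} [NormedAddCommGroup E] [NormedSpace ℝ E]
    (f : (ℝ × ℝ) × ℝ → E) (z : (ℝ × ℝ) × ℝ) : E := fderiv ℝ f z ((0, 1), 0)

/-- Time derivative `∂_t`. -/
def tdt {E : Type*} [NormedAddCommGroup E] [NormedSpace ℝ E]
    (f : (ℝ × ℝ) × ℝ → E) (z : (ℝ × ℝ) × ℝ) : E := fderiv ℝ f z ((0, 0), 1)

/-- Spatial gradient. -/
def tgrad (g : (ℝ × ℝ) × ℝ → ℝ) (z : (ℝ × ℝ) × ℝ) : ℝ × ℝ := (sp1 g z, sp2 g z)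

/-- Spatial perpendicular gradient `∇^⊥ g = (−∂₂g, ∂₁g)`. -/
def tgradPerp (g : (ℝ × ℝ) × ℝ → ℝ) (z : (ℝ × ℝ) × ℝ) : ℝ × ℝ := (-(sp2 g z), sp1 g z)

/-- Spatial Laplacian. -/
def tlap (g : (ℝ × ℝ) × ℝ → ℝ) (z : (ℝ × ℝ) × ℝ) : ℝ := sp1 (sp1 g) z + sp2 (sp2 g) z

/-- Spatial curl of a time-dependent vector field. -/
def tcurl (X : (ℝ × ℝ) × ℝ → ℝ × ℝ) (z : (ℝ × ℝ) × ℝ) : ℝ := (sp1 X z).2 - (sp2 X z).1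

/-- Spatial divergence of a time-dependent vector field. -/
def tdiv (X : (ℝ × ℝ) × ℝ → ℝ × ℝ) (z : (ℝ × ℝ) × ℝ) : ℝ := (sp1 X z).1 + (sp2 X z).2

/-- Covariant partial derivative `∂₁^B w = ∂₁w − iB₁w`. -/
def tcpd1 (B : (ℝ × ℝ) × ℝ → ℝ × ℝ) (w : (ℝ × ℝ) × ℝ → ℂ) (z : (ℝ × ℝ) × ℝ) : ℂ :=
  sp1 w z - Complex.I * ((B z).1 : ℂ) * w z

/-- Covariant partial derivative `∂₂^B w = ∂₂w − iB₂w`. -/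
def tcpd2 (B : (ℝ × ℝ) × ℝ → ℝ × ℝ) (w : (ℝ × ℝ) × ℝ → ℂ) (z : (ℝ × ℝ) × ℝ) : ℂ :=
  sp2 w z - Complex.I * ((B z).2 : ℂ) * w z

/-- Covariant gradient `∇_B w = ∇w − iBw` (spatial). -/
def tcovGrad (B : (ℝ × ℝ) × ℝ → ℝ × ℝ) (w : (ℝ × ℝ) × ℝ → ℂ) (z : (ℝ × ℝ) × ℝ) : ℂ × ℂ :=
  (tcpd1 B w z, tcpd2 B w z)

/-- Covariant Laplacian `Δ_B w`. -/
def tcovLap (B : (ℝ × ℝ) × ℝ → ℝ × ℝ) (w : (ℝ × ℝ) × ℝ → ℂ) (z : (ℝ × ℝ) × ℝ) : ℂ :=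
  tcpd1 B (tcpd1 B w) z + tcpd2 B (tcpd2 B w) z

/-- Covariant time derivative `∂_ξ w = ∂_t w + iξw`. -/
def covt (ξ : (ℝ × ℝ) × ℝ → ℝ) (w : (ℝ × ℝ) × ℝ → ℂ) (z : (ℝ × ℝ) × ℝ) : ℂ :=
  tdt w z + Complex.I * (ξ z : ℂ) * w z

/-- Vorticity `μ(w,B) = curl((iw, ∇_B w) + B)`. -/
def tvort (w : (ℝ × ℝ) × ℝ → ℂ) (B : (ℝ × ℝ) × ℝ → ℝ × ℝ) (z : (ℝ × ℝ) × ℝ) : ℝ :=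
  tcurl (fun y => ripv (Complex.I * w y) (tcovGrad B w y) + B y) z

/-- Velocity `V(w,B,ξ) = ∇(iw,∂_ξ w) − ∂_t(iw,∇_B w) − (∂_t B + ∇ξ)`. -/
def tvel (w : (ℝ × ℝ) × ℝ → ℂ) (B : (ℝ × ℝ) × ℝ → ℝ × ℝ) (ξ : (ℝ × ℝ) × ℝ → ℝ)
    (z : (ℝ × ℝ) × ℝ) : ℝ × ℝ :=
  tgrad (fun y => rip (Complex.I * w y) (covt ξ w y)) z
    - tdt (fun y => ripv (Complex.I * w y) (tcovGrad B w y)) z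
    - (tdt B z + tgrad ξ z)

/-- Time-dependent Ginzburg–Landau energy density. -/
def tglEnergy (ε : ℝ) (w : (ℝ × ℝ) × ℝ → ℂ) (B : (ℝ × ℝ) × ℝ → ℝ × ℝ)
    (z : (ℝ × ℝ) × ℝ) : ℝ :=
  (1 / 2) * (Complex.normSq (tcpd1 B w z) + Complex.normSq (tcpd2 B w z)
    + (1 - Complex.normSq (w z)) ^ 2 / (2 * ε ^ 2) + (tcurl B z) ^ 2)

/-!
The covariant derivatives `D_a = ∂_a - iα` are compatible with the real inner product of `ℂ`,
`∂_a (f, g) = (D_a f, g) + (f, D_a g)`, and their commutator is the curvature,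
`[D_a, D_b] = -i (∂_a β - ∂_b α)`. Hence
`∂_a (D_a v, D_b v) - ½ ∂_b |D_a v|² = (D_a D_a v, D_b v) - (∂_a β - ∂_b α) (iv, D_a v)`,
and summing over `a` for fixed `b` gives the divergence of the kinetic part of the tensor. A
potential `W(|v|²)` contributes `-2W'(|v|²) (v, D_b v)`, by compatibility again, and the magnetic
term contributes `h' ∂_b h'`.
-/

section RealInnerProduct

theorem rip_eq_inner (z w : ℂ) : rip z w = inner ℝ z w := by
  simp only [rip, Complex.inner, mul_re, conj_re, conj_im]
  ring

theorem rip_self (z : ℂ) : rip z z = normSq z :=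
  (normSq_apply z).symm

theorem rip_comm (z w : ℂ) : rip z w = rip w z := by
  simp only [rip_eq_inner, real_inner_comm]

theorem rip_add_left (z₁ z₂ w : ℂ) : rip (z₁ + z₂) w = rip z₁ w + rip z₂ w := by
  simp only [rip_eq_inner, inner_add_left]

theorem rip_sub_left (z₁ z₂ w : ℂ) : rip (z₁ - z₂) w = rip z₁ w - rip z₂ w := by
  simp only [rip_eq_inner, inner_sub_left]

theorem rip_smul_left (c : ℝ) (z w : ℂ) : rip (c • z) w = c * rip z w := by
  simp only [rip_eq_inner, real_inner_smul_left]

theorem rip_I_mul_left (z w : ℂ) : rip (I * z) w = -rip z (I * w) := by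
  simp only [rip, I_mul_re, I_mul_im]
  ring

end RealInnerProduct

section CovariantDerivative

variable {E : Type*} [NormedAddCommGroup E] [NormedSpace ℝ E]
  {u f g : E → ℂ} {α β : E → ℝ} {a b x : E}

/-- The covariant derivative `D_a u = ∂_a u - iαu` along `a`. Here `α` is only the component along
`a` of the connection form, so that `cpd1` and `cpd2` are definitionally instances. -/
def covDeriv (a : E) (α : E → ℝ) (u : E → ℂ) (x : E) : ℂ :=
  fderiv ℝ u x a - I * (α x : ℂ) * u x

theorem differentiableAt_rip (hf : DifferentiableAt ℝ f x) (hg : DifferentiableAt ℝ g x) :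
    DifferentiableAt ℝ (fun y => rip (f y) (g y)) x := by
  simpa only [rip_eq_inner] using hf.inner ℝ hg

theorem differentiableAt_normSq (hf : DifferentiableAt ℝ f x) :
    DifferentiableAt ℝ (fun y => normSq (f y)) x := by
  simpa only [rip_self] using differentiableAt_rip hf hf

theorem fderiv_rip_apply (α : E → ℝ) (hf : DifferentiableAt ℝ f x)
    (hg : DifferentiableAt ℝ g x) :
    fderiv ℝ (fun y => rip (f y) (g y)) x a
      = rip (covDeriv a α f x) (g x) + rip (f x) (covDeriv a α g x) := by
  have leibniz : fderiv ℝ (fun y => rip (f y) (g y)) x a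
      = rip (fderiv ℝ f x a) (g x) + rip (fderiv ℝ g x a) (f x) := by
    simp only [rip_eq_inner]
    rw [fderiv_inner_apply ℝ hf hg, real_inner_comm, add_comm]
  have covDeriv_eq (h : E → ℂ) : covDeriv a α h x = fderiv ℝ h x a - α x • (I * h x) := by
    rw [covDeriv, real_smul]
    ring
  have skew : rip (I * f x) (g x) = -rip (I * g x) (f x) := by
    rw [rip_I_mul_left, rip_comm]
  rw [rip_comm (f x), leibniz]
  simp only [covDeriv_eq, rip_sub_left, rip_smul_left]
  linear_combination α x * skew

theorem fderiv_normSq_apply (α : E → ℝ) (hf : DifferentiableAt ℝ f x) :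
    fderiv ℝ (fun y => normSq (f y)) x a = 2 * rip (covDeriv a α f x) (f x) := by
  simp only [← rip_self]
  rw [fderiv_rip_apply α hf hf, rip_comm (f x), two_mul]

theorem hasFDerivAt_covDeriv (hu : ContDiffAt ℝ 2 u x) (hα : DifferentiableAt ℝ α x) :
    HasFDerivAt (covDeriv a α u)
      ((fderiv ℝ (fderiv ℝ u) x).flip a
        - ((I * (α x : ℂ)) • fderiv ℝ u x + u x • I • ofRealCLM.comp (fderiv ℝ α x))) x := by
  have hu' : DifferentiableAt ℝ (fderiv ℝ u) x :=
    (hu.fderiv_right (m := 1) le_rfl).differentiableAt one_ne_zero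
  have partial_deriv :
      HasFDerivAt (fun y => fderiv ℝ u y a) ((fderiv ℝ (fderiv ℝ u) x).flip a) x := by
    simpa using hu'.hasFDerivAt.clm_apply (hasFDerivAt_const a x)
  have connection : HasFDerivAt (fun y => (α y : ℂ)) (ofRealCLM.comp (fderiv ℝ α x)) x :=
    ofRealCLM.hasFDerivAt.comp x hα.hasFDerivAt
  exact partial_deriv.sub
    ((connection.const_mul I).mul (hu.differentiableAt two_ne_zero).hasFDerivAt)

theorem covDeriv_commutator (hu : ContDiffAt ℝ 2 u x)
    (hα : DifferentiableAt ℝ α x) (hβ : DifferentiableAt ℝ β x) :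
    covDeriv a α (covDeriv b β u) x - covDeriv b β (covDeriv a α u) x
      = -(fderiv ℝ β x a - fderiv ℝ α x b) • (I * u x) := by
  have symm : fderiv ℝ (fderiv ℝ u) x a b = fderiv ℝ (fderiv ℝ u) x b a :=
    (hu.isSymmSndFDerivAt (by simp)).eq a b
  rw [covDeriv, covDeriv.eq_def b β (covDeriv a α u), (hasFDerivAt_covDeriv hu hα).fderiv,
    (hasFDerivAt_covDeriv hu hβ).fderiv]
  simp only [covDeriv, symm, sub_apply, add_apply, smul_apply, ContinuousLinearMap.flip_apply,
    ContinuousLinearMap.comp_apply, ofRealCLM_apply, smul_eq_mul, neg_sub, real_smul, ofReal_sub]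
  ring

theorem fderiv_rip_covDeriv_sub_fderiv_normSq_covDeriv (hu : ContDiffAt ℝ 2 u x)
    (hα : DifferentiableAt ℝ α x) (hβ : DifferentiableAt ℝ β x) :
    fderiv ℝ (fun y => rip (covDeriv a α u y) (covDeriv b β u y)) x a
        - 1 / 2 * fderiv ℝ (fun y => normSq (covDeriv a α u y)) x b
      = rip (covDeriv a α (covDeriv a α u) x) (covDeriv b β u x)
        - (fderiv ℝ β x a - fderiv ℝ α x b) * rip (I * u x) (covDeriv a α u x) := by
  have hDa := (hasFDerivAt_covDeriv (a := a) hu hα).differentiableAt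
  have hDb := (hasFDerivAt_covDeriv (a := b) hu hβ).differentiableAt
  have commutator := sub_eq_iff_eq_add.mp (covDeriv_commutator (a := a) (b := b) hu hα hβ)
  rw [fderiv_rip_apply α hDa hDb, fderiv_normSq_apply β hDa, rip_comm (covDeriv a α u x),
    commutator, rip_add_left, rip_smul_left]
  ring

end CovariantDerivative

section Plane

variable {v : ℝ × ℝ → ℂ} {B : ℝ × ℝ → ℝ × ℝ} {W : ℝ → ℝ} {W' : ℝ} {x : ℝ × ℝ}

theorem cpd1_eq_covDeriv : cpd1 B v = covDeriv (1, 0) (fun y => (B y).1) v := rfl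

theorem cpd2_eq_covDeriv : cpd2 B v = covDeriv (0, 1) (fun y => (B y).2) v := rfl

theorem differentiableAt_cpd1 (hv : ContDiffAt ℝ 2 v x) (hB : DifferentiableAt ℝ B x) :
    DifferentiableAt ℝ (cpd1 B v) x :=
  (hasFDerivAt_covDeriv hv hB.fst).differentiableAt

theorem differentiableAt_cpd2 (hv : ContDiffAt ℝ 2 v x) (hB : DifferentiableAt ℝ B x) :
    DifferentiableAt ℝ (cpd2 B v) x :=
  (hasFDerivAt_covDeriv hv hB.snd).differentiableAt

theorem differentiableAt_scurl (hB : ContDiffAt ℝ 2 B x) : DifferentiableAt ℝ (scurl B) x := by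
  have hB' : DifferentiableAt ℝ (fderiv ℝ B) x :=
    (hB.fderiv_right (m := 1) le_rfl).differentiableAt one_ne_zero
  exact (hB'.clm_apply (differentiableAt_const _)).snd.sub
    (hB'.clm_apply (differentiableAt_const _)).fst

theorem scurl_eq_fderiv_sub_fderiv (hB : DifferentiableAt ℝ B x) :
    scurl B x = fderiv ℝ (fun y => (B y).2) x (1, 0) - fderiv ℝ (fun y => (B y).1) x (0, 1) := by
  rw [hB.hasFDerivAt.fst.fderiv, hB.hasFDerivAt.snd.fderiv]
  rfl

theorem kinetic_stress_divergence_fst (hv : ContDiffAt ℝ 2 v x) (hB : DifferentiableAt ℝ B x) :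
    pd1 (fun y => rip (cpd1 B v y) (cpd1 B v y)) x
        + pd2 (fun y => rip (cpd2 B v y) (cpd1 B v y)) x
        - 1 / 2 * (pd1 (fun y => normSq (cpd1 B v y)) x + pd1 (fun y => normSq (cpd2 B v y)) x)
      = rip (covLap B v x) (cpd1 B v x) + scurl B x * rip (I * v x) (cpd2 B v x) := by
  have flux₁ := fderiv_rip_covDeriv_sub_fderiv_normSq_covDeriv (a := (1, 0)) (b := (1, 0))
    hv hB.fst hB.fst
  have flux₂ := fderiv_rip_covDeriv_sub_fderiv_normSq_covDeriv (a := (0, 1)) (b := (1, 0))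
    hv hB.snd hB.fst
  simp only [covLap, rip_add_left, scurl_eq_fderiv_sub_fderiv hB, pd1, pd2, cpd1_eq_covDeriv,
    cpd2_eq_covDeriv]
  linear_combination flux₁ + flux₂

theorem kinetic_stress_divergence_snd (hv : ContDiffAt ℝ 2 v x) (hB : DifferentiableAt ℝ B x) :
    pd1 (fun y => rip (cpd1 B v y) (cpd2 B v y)) x
        + pd2 (fun y => rip (cpd2 B v y) (cpd2 B v y)) x
        - 1 / 2 * (pd2 (fun y => normSq (cpd1 B v y)) x + pd2 (fun y => normSq (cpd2 B v y)) x)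
      = rip (covLap B v x) (cpd2 B v x) - scurl B x * rip (I * v x) (cpd1 B v x) := by
  have flux₁ := fderiv_rip_covDeriv_sub_fderiv_normSq_covDeriv (a := (1, 0)) (b := (0, 1))
    hv hB.fst hB.snd
  have flux₂ := fderiv_rip_covDeriv_sub_fderiv_normSq_covDeriv (a := (0, 1)) (b := (0, 1))
    hv hB.snd hB.snd
  simp only [covLap, rip_add_left, scurl_eq_fderiv_sub_fderiv hB, pd1, pd2, cpd1_eq_covDeriv,
    cpd2_eq_covDeriv]
  linear_combination flux₁ + flux₂

/-- The density `½|∇_B v|² + W(|v|²) - ½(curl B)²` subtracted on the diagonal of the stress-energy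
tensor; `W` is the potential as a function of `|v|²`. -/
def glLagrangian (W : ℝ → ℝ) (B : ℝ × ℝ → ℝ × ℝ) (v : ℝ × ℝ → ℂ) (x : ℝ × ℝ) : ℝ :=
  (1 / 2) * (normSq (cpd1 B v x) + normSq (cpd2 B v x)) + W (normSq (v x))
    - (1 / 2) * (scurl B x) ^ 2

theorem hasFDerivAt_glLagrangian (hv : ContDiffAt ℝ 2 v x) (hB : ContDiffAt ℝ 2 B x)
    (hW : HasDerivAt W W' (normSq (v x))) :
    HasFDerivAt (glLagrangian W B v)
      ((1 / 2 : ℝ) • (fderiv ℝ (fun y => normSq (cpd1 B v y)) x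
          + fderiv ℝ (fun y => normSq (cpd2 B v y)) x)
        + W' • fderiv ℝ (fun y => normSq (v y)) x
        - scurl B x • fderiv ℝ (scurl B) x) x := by
  have hB₁ : DifferentiableAt ℝ B x := hB.differentiableAt two_ne_zero
  have kinetic := ((differentiableAt_normSq (differentiableAt_cpd1 hv hB₁)).hasFDerivAt.add
    (differentiableAt_normSq (differentiableAt_cpd2 hv hB₁)).hasFDerivAt).const_mul (1 / 2)
  have potential := hW.comp_hasFDerivAt x
    (differentiableAt_normSq (hv.differentiableAt two_ne_zero)).hasFDerivAt
  have magnetic := ((differentiableAt_scurl hB).hasFDerivAt.pow 2).const_mul (1 / 2)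
  refine ((kinetic.add potential).sub magnetic).congr_fderiv ?_
  module

theorem fderiv_rip_self_sub_glLagrangian_apply {u : ℝ × ℝ → ℂ} {e : ℝ × ℝ} (α : ℝ × ℝ → ℝ)
    (hu : DifferentiableAt ℝ u x) (hv : ContDiffAt ℝ 2 v x) (hB : ContDiffAt ℝ 2 B x)
    (hW : HasDerivAt W W' (normSq (v x))) :
    fderiv ℝ (fun y => rip (u y) (u y) - glLagrangian W B v y) x e
      = fderiv ℝ (fun y => rip (u y) (u y)) x e
        - 1 / 2 * (fderiv ℝ (fun y => normSq (cpd1 B v y)) x e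
          + fderiv ℝ (fun y => normSq (cpd2 B v y)) x e)
        - 2 * W' * rip (v x) (covDeriv e α v x)
        + scurl B x * fderiv ℝ (scurl B) x e := by
  rw [((differentiableAt_rip hu hu).hasFDerivAt.fun_sub
    (hasFDerivAt_glLagrangian hv hB hW)).fderiv]
  simp only [sub_apply, add_apply, smul_apply, smul_eq_mul,
    fderiv_normSq_apply α (hv.differentiableAt two_ne_zero), rip_comm (v x)]
  ring

theorem stress_energy_tensor_divergence_general
    (hv : ContDiffAt ℝ 2 v x) (hB : ContDiffAt ℝ 2 B x) (hW : HasDerivAt W W' (normSq (v x))) :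
    (pd1 (fun y => rip (cpd1 B v y) (cpd1 B v y) - glLagrangian W B v y) x
          + pd2 (fun y => rip (cpd2 B v y) (cpd1 B v y)) x,
        pd1 (fun y => rip (cpd1 B v y) (cpd2 B v y)) x
          + pd2 (fun y => rip (cpd2 B v y) (cpd2 B v y) - glLagrangian W B v y) x)
      = ripv (covLap B v x - (2 * W') • v x) (covGrad B v x)
        - scurl B x • perp (sgradPerp (scurl B) x + ripv (I * v x) (covGrad B v x)) := by
  have hB₁ : DifferentiableAt ℝ B x := hB.differentiableAt two_ne_zero
  have diagonal₁ := fderiv_rip_self_sub_glLagrangian_apply (e := (1, 0)) (fun y => (B y).1)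
    (differentiableAt_cpd1 hv hB₁) hv hB hW
  have diagonal₂ := fderiv_rip_self_sub_glLagrangian_apply (e := (0, 1)) (fun y => (B y).2)
    (differentiableAt_cpd2 hv hB₁) hv hB hW
  have kinetic₁ := kinetic_stress_divergence_fst hv hB₁
  have kinetic₂ := kinetic_stress_divergence_snd hv hB₁
  rw [← cpd1_eq_covDeriv] at diagonal₁
  rw [← cpd2_eq_covDeriv] at diagonal₂
  ext <;> simp only [pd1, pd2, ripv, perp, sgradPerp, covGrad, rip_sub_left, rip_smul_left,
    Prod.fst_sub, Prod.snd_sub, Prod.smul_fst, Prod.smul_snd, Prod.fst_add, Prod.snd_add,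
    smul_eq_mul] at kinetic₁ kinetic₂ ⊢
  · linear_combination diagonal₁ + kinetic₁
  · linear_combination diagonal₂ + kinetic₂

end Plane

theorem hasDerivAt_glPotential (ε s : ℝ) :
    HasDerivAt (fun t => (1 - t) ^ 2 / (4 * ε ^ 2)) (-((1 - s) / (2 * ε ^ 2))) s := by
  refine ((((hasDerivAt_id s).const_sub 1).pow 2).div_const (4 * ε ^ 2)).congr_deriv ?_
  simp only [id_eq]
  ring

theorem glForce_eq_neg_smul (ε : ℝ) (z : ℂ) :
    z / (ε ^ 2 : ℂ) * (1 - (normSq z : ℂ)) = -((2 * -((1 - normSq z) / (2 * ε ^ 2))) • z) := by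
  rw [real_smul]
  push_cast
  ring

/-- divergence of the stress-energy tensor:
`div T = (Δ_B v + (v/ε²)(1−|v|²), ∇_B v) − h'(∇^⊥ h' + (iv, ∇_B v))^⊥`, where
`h' = curl B` and `(div T)_i = ∂₁T_{1i} + ∂₂T_{2i}`. -/
theorem stress_energy_tensor_divergence
    (Ω : Set (ℝ × ℝ)) (hΩ : IsOpen Ω) (ε : ℝ) (hε : 0 < ε)
    (v : ℝ × ℝ → ℂ) (B : ℝ × ℝ → ℝ × ℝ)
    (hv : ContDiffOn ℝ 3 v Ω) (hB : ContDiffOn ℝ 2 B Ω)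
    (T11 T12 T21 T22 : ℝ × ℝ → ℝ)
    (hT11 : T11 = fun x => rip (cpd1 B v x) (cpd1 B v x)
      - ((1 / 2) * (Complex.normSq (cpd1 B v x) + Complex.normSq (cpd2 B v x))
        + (1 - Complex.normSq (v x)) ^ 2 / (4 * ε ^ 2) - (1 / 2) * (scurl B x) ^ 2))
    (hT12 : T12 = fun x => rip (cpd1 B v x) (cpd2 B v x))
    (hT21 : T21 = fun x => rip (cpd2 B v x) (cpd1 B v x))
    (hT22 : T22 = fun x => rip (cpd2 B v x) (cpd2 B v x)
      - ((1 / 2) * (Complex.normSq (cpd1 B v x) + Complex.normSq (cpd2 B v x))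
        + (1 - Complex.normSq (v x)) ^ 2 / (4 * ε ^ 2) - (1 / 2) * (scurl B x) ^ 2)) :
    ∀ x ∈ Ω,
      (pd1 T11 x + pd2 T21 x, pd1 T12 x + pd2 T22 x)
        = ripv (covLap B v x
              + v x / (ε ^ 2 : ℂ) * (1 - (Complex.normSq (v x) : ℂ)))
            (covGrad B v x)
          - (scurl B x) • perp (sgradPerp (scurl B) x
              + ripv (Complex.I * v x) (covGrad B v x)) := by
  intro x hx
  have hvx : ContDiffAt ℝ 2 v x := (hv.contDiffAt (hΩ.mem_nhds hx)).of_le (by norm_num)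
  have hBx : ContDiffAt ℝ 2 B x := hB.contDiffAt (hΩ.mem_nhds hx)
  rw [hT11, hT12, hT21, hT22, glForce_eq_neg_smul, ← sub_eq_add_neg]
  exact stress_energy_tensor_divergence_general hvx hBx (hasDerivAt_glPotential ε _)

end
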